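/- Let Λ = KQ/I be an arbitrary basic finite-dimensional algebra over an algebraically closed field and d a dimension vector. If D is an irreducible component of Rep S for some semisimple sequence S ∈ Seq(d) and there exists a point x ∈ D with Γ(M_x) = 1, then the Zariski closure of D is an irreducible component of Rep_d(Λ). In particular, the closure of D is an irreducible component of Rep_d(Λ) whenever D contains a point encoding a uniserial module. -/

import Mathlib

open Finset

/-! # Varieties of representations of a quiver with relations: basic setup -/

/-- The Zariski topology on the affine space `ι → K`: it is generated by the basic open
sets `D(p) = {x | p(x) ≠ 0}`, where `p` ranges over multivariate polynomials. -/
def zariskiTopology (ι K : Type) [CommSemiring K] : TopologicalSpace (ι → K) :=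
  TopologicalSpace.generateFrom
    {U | ∃ p : MvPolynomial ι K, U = {x | MvPolynomial.eval x p ≠ 0}}

/-- A finite quiver `Q`: vertices `Fin n`, arrows `Fin numArrows` with source and
target maps. -/
structure QuiverData where
  n : ℕ
  numArrows : ℕ
  src : Fin numArrows → Fin n
  tgt : Fin numArrows → Fin n

namespace QuiverData

variable (Q : QuiverData) (d : Fin Q.n → ℕ) (K : Type) [Field K]

/-- Index of the coordinates of the affine space of `d`-dimensional representations:
for each arrow `a` a matrix entry index in `Fin (d (tgt a)) × Fin (d (src a))`. -/
abbrev Coords := Σ a : Fin Q.numArrows, Fin (d (Q.tgt a)) × Fin (d (Q.src a))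

/-- The affine space of `d`-dimensional representations of `Q`:
a point `x` assigns to each arrow `a` a `d (tgt a) × d (src a)` matrix over `K`. -/
abbrev RepSpace := Coords Q d → K

/-- `RepSpace` carries the Zariski topology. -/
noncomputable instance instRepTop : TopologicalSpace (RepSpace Q d K) :=
  zariskiTopology (Coords Q d) K

/-- The underlying `K`-vector space `⊕ᵢ K^{dᵢ}` of any `d`-dimensional representation. -/
abbrev Carrier := (Σ i : Fin Q.n, Fin (d i)) → K

/-- The projection onto the component of the `i`-th vertex (action of the primitive
idempotent `eᵢ`). -/
def proj (i : Fin Q.n) : Carrier Q d K →ₗ[K] Carrier Q d K where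
  toFun m := fun jv => if jv.1 = i then m jv else 0
  map_add' u v := by
    funext jv; by_cases h : jv.1 = i <;> simp [h]
  map_smul' c u := by
    funext jv; by_cases h : jv.1 = i <;> simp [h]

/-- The action of the arrow `a` on the carrier space of the representation `x`. -/
noncomputable def arrowMap (x : RepSpace Q d K) (a : Fin Q.numArrows) :
    Carrier Q d K →ₗ[K] Carrier Q d K where
  toFun m := fun jv =>
    if h : jv.1 = Q.tgt a then
      ∑ w : Fin (d (Q.src a)), x ⟨a, (Fin.cast (congrArg d h) jv.2, w)⟩ * m ⟨Q.src a, w⟩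
    else 0
  map_add' u v := by
    funext jv
    by_cases h : jv.1 = Q.tgt a <;> simp [h, mul_add, Finset.sum_add_distrib]
  map_smul' c u := by
    funext jv
    by_cases h : jv.1 = Q.tgt a <;>
      simp [h, Finset.mul_sum, mul_comm, mul_left_comm, mul_assoc]

/-- The action of a word `w = [a_k, …, a_1]` of arrows on the representation `x`
(the arrow `a_1` acts first; non-composable words act as `0`). -/
noncomputable def wordMap (x : RepSpace Q d K) (w : List (Fin Q.numArrows)) :
    Module.End K (Carrier Q d K) :=
  (w.map fun a => (arrowMap Q d K x a : Module.End K (Carrier Q d K))).prod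

/-- The submodule `J^l · M_x` of the module `M_x`: the sum of the images of all words of
arrows of length `l` (for an admissible ideal, the radical acts through the arrows). -/
noncomputable def radPow (x : RepSpace Q d K) (l : ℕ) : Submodule K (Carrier Q d K) :=
  ⨆ w : {w : List (Fin Q.numArrows) // w.length = l},
    LinearMap.range (wordMap Q d K x w.1)

/-- The socle series of `M_x`: `socPow x l = soc_l(M_x)`. -/
noncomputable def socPow (x : RepSpace Q d K) : ℕ → Submodule K (Carrier Q d K)
  | 0 => ⨅ a, LinearMap.ker (arrowMap Q d K x a)
  | (l+1) => ⨅ a, (socPow x l).comap (arrowMap Q d K x a)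

/-- The dimension, at the vertex `i`, of a (vertex-graded) subspace `N`. -/
noncomputable def vdim (N : Submodule K (Carrier Q d K)) (i : Fin Q.n) : ℕ :=
  Module.finrank K (N.map (proj Q d K i))

/-- The radical layering `S(M_x) = (M/JM, JM/J²M, …, J^L M/J^{L+1} M)` of the module `M_x`,
recorded through the dimension vectors of its semisimple layers. -/
noncomputable def radLayering (L : ℕ) (x : RepSpace Q d K) :
    Fin (L+1) → Fin Q.n → ℕ :=
  fun l i => vdim Q d K (radPow Q d K x l) i - vdim Q d K (radPow Q d K x (l+1)) i

/-- The socle layering `S*(M_x) = (soc₀M, soc₁M/soc₀M, …)` of the module `M_x`, recorded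
through the dimension vectors of its semisimple layers. -/
noncomputable def socLayering (L : ℕ) (x : RepSpace Q d K) :
    Fin (L+1) → Fin Q.n → ℕ :=
  fun l i => vdim Q d K (socPow Q d K x l) i -
    (if (l : ℕ) = 0 then 0 else vdim Q d K (socPow Q d K x ((l : ℕ) - 1)) i)

end QuiverData

/-- The dominance order on semisimple sequences (recorded as sequences of dimension
vectors): `dominates S S'` means `S ≤ S'`, i.e. `⊕_{j≤l} S_j ⊆ ⊕_{j≤l} S'_j` for all `l`. -/
def dominates {n L : ℕ} (S S' : Fin (L+1) → Fin n → ℕ) : Prop :=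
  ∀ (l : Fin (L+1)) (i : Fin n),
    ∑ j ∈ Finset.univ.filter (fun j => j ≤ l), S j i ≤
      ∑ j ∈ Finset.univ.filter (fun j => j ≤ l), S' j i

/-- A semisimple sequence has dimension vector `d` if its layers' dimension vectors sum
to `d`. -/
def hasDimVec {n L : ℕ} (S : Fin (L+1) → Fin n → ℕ) (d : Fin n → ℕ) : Prop :=
  ∀ i, ∑ l, S l i = d i

namespace QuiverData

variable (Q : QuiverData) (d : Fin Q.n → ℕ) (K : Type) [Field K]

/-- Evaluation of a formal noncommutative polynomial in the vertices (`Sum.inl`) and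
arrows (`Sum.inr`) of `Q` on the representation `x`; an element of the path algebra `KQ`
is represented by such a polynomial. -/
noncomputable def evalRel (x : RepSpace Q d K) :
    FreeAlgebra K (Fin Q.n ⊕ Fin Q.numArrows) →ₐ[K] Module.End K (Carrier Q d K) :=
  FreeAlgebra.lift K
    (Sum.elim (fun i => (proj Q d K i : Module.End K (Carrier Q d K)))
      (fun a => (arrowMap Q d K x a : Module.End K (Carrier Q d K))))

/-- The affine variety `Rep_d(Λ)` for `Λ = KQ/I`, where the ideal `I` is generated by the
set `R` of relations: the set of points of `RepSpace` annihilating every relation. -/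
def RepVar (R : Set (FreeAlgebra K (Fin Q.n ⊕ Fin Q.numArrows))) :
    Set (RepSpace Q d K) :=
  {x | ∀ r ∈ R, evalRel Q d K x r = 0}

/-- The affine variety `Rep_d(Λ)` for the truncated path algebra
`Λ = KQ/⟨all paths of length L+1⟩`. -/
def TruncRepVar (L : ℕ) : Set (RepSpace Q d K) :=
  {x | ∀ w : List (Fin Q.numArrows), w.length = L + 1 → wordMap Q d K x w = 0}

/-- A submodule of `M_x`, i.e. a subspace stable under the arrows and the vertex
idempotents. -/
def Stable (x : RepSpace Q d K) (N : Submodule K (Carrier Q d K)) : Prop :=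
  (∀ a, N.map (arrowMap Q d K x a) ≤ N) ∧ ∀ i, N.map (proj Q d K i) ≤ N

/-- A submodule `N` of `M_x` is indecomposable (as a module). -/
def IndecompSub (x : RepSpace Q d K) (N : Submodule K (Carrier Q d K)) : Prop :=
  N ≠ ⊥ ∧ ∀ N₁ N₂ : Submodule K (Carrier Q d K),
    Stable Q d K x N₁ → Stable Q d K x N₂ → N₁ ≤ N → N₂ ≤ N →
    N₁ ⊔ N₂ = N → N₁ ⊓ N₂ = ⊥ → N₁ = ⊥ ∨ N₂ = ⊥

/-- The module `M_x` is indecomposable. -/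
def IndecompRep (x : RepSpace Q d K) : Prop :=
  IndecompSub Q d K x ⊤

/-- The module `M_x` is uniserial: its submodules form a chain. -/
def UniserialRep (x : RepSpace Q d K) : Prop :=
  ∀ N₁ N₂ : Submodule K (Carrier Q d K),
    Stable Q d K x N₁ → Stable Q d K x N₂ → N₁ ≤ N₂ ∨ N₂ ≤ N₁

/-- `M_x` decomposes as a direct sum of `s` indecomposable submodules whose dimension
vectors are `D 0, …, D (s-1)`. -/
def DecompWith (x : RepSpace Q d K) (s : ℕ) (D : Fin s → Fin Q.n → ℕ) : Prop :=
  ∃ N : Fin s → Submodule K (Carrier Q d K),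
    (∀ r, Stable Q d K x (N r)) ∧
    (∀ r, Disjoint (N r) (⨆ t, ⨆ (_ : t ≠ r), N t)) ∧
    (⨆ r, N r) = ⊤ ∧
    (∀ r, IndecompSub Q d K x (N r)) ∧
    ∀ r i, vdim Q d K (N r) i = D r i

/-- A homomorphism of representations `M_x → M_y` (for possibly different dimension
vectors): a linear map commuting with the arrow actions and the vertex projections. -/
def RepHom (dx dy : Fin Q.n → ℕ) (x : RepSpace Q dx K) (y : RepSpace Q dy K)
    (φ : Carrier Q dx K →ₗ[K] Carrier Q dy K) : Prop :=
  (∀ a, φ ∘ₗ arrowMap Q dx K x a = arrowMap Q dy K y a ∘ₗ φ) ∧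
  ∀ i, φ ∘ₗ proj Q dx K i = proj Q dy K i ∘ₗ φ

/-- The submodule `N` of `M_x` is isomorphic, as a representation, to `M_y`. -/
def SubrepIso (dy : Fin Q.n → ℕ) (x : RepSpace Q d K)
    (N : Submodule K (Carrier Q d K)) (y : RepSpace Q dy K) : Prop :=
  ∃ φ : Carrier Q d K →ₗ[K] Carrier Q dy K,
    N ⊓ LinearMap.ker φ = ⊥ ∧ N.map φ = ⊤ ∧
    (∀ a, ∀ m ∈ N, φ (arrowMap Q d K x a m) = arrowMap Q dy K y a (φ m)) ∧
    (∀ i, ∀ m ∈ N, φ (proj Q d K i m) = proj Q dy K i (φ m))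

/-- The representations `M_x` and `M_y` are isomorphic; the isomorphism classes are
exactly the orbits of the `GL(d)`-action. -/
def IsoRep (x y : RepSpace Q d K) : Prop :=
  ∃ φ : Carrier Q d K ≃ₗ[K] Carrier Q d K,
    (∀ a m, φ (arrowMap Q d K x a m) = arrowMap Q d K y a (φ m)) ∧
    ∀ i m, φ (proj Q d K i m) = proj Q d K i (φ m)

/-- The `GL(d)`-orbit of the point `x`, i.e. the set of points encoding modules
isomorphic to `M_x`. -/
def orbitSet (x : RepSpace Q d K) : Set (RepSpace Q d K) :=
  {y | IsoRep Q d K x y}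

/-- Given a family `P` of varieties `Rep_dv(Λ)` (one for every dimension vector `dv`),
`Ext¹_Λ(M_x, M_y) = 0`: every extension `0 → M_y → E → M_x → 0` of `Λ`-modules splits. -/
def Ext1Zero (P : ∀ dv : Fin Q.n → ℕ, Set (RepSpace Q dv K))
    (dx dy : Fin Q.n → ℕ) (x : RepSpace Q dx K) (y : RepSpace Q dy K) : Prop :=
  ∀ z ∈ P (fun i => dx i + dy i),
    ∀ (ι : Carrier Q dy K →ₗ[K] Carrier Q (fun i => dx i + dy i) K)
      (π : Carrier Q (fun i => dx i + dy i) K →ₗ[K] Carrier Q dx K),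
      RepHom Q K dy (fun i => dx i + dy i) y z ι →
      RepHom Q K (fun i => dx i + dy i) dx z x π →
      Function.Injective ι → Function.Surjective π →
      LinearMap.ker π = LinearMap.range ι →
      ∃ σ : Carrier Q dx K →ₗ[K] Carrier Q (fun i => dx i + dy i) K,
        RepHom Q K dx (fun i => dx i + dy i) x z σ ∧ π ∘ₗ σ = LinearMap.id

/-- The direct sum `C₁ ⊕ ⋯ ⊕ C_s` of subvarieties `C_r ⊆ Rep_{D r}(Λ)`: the set of
points `x ∈ Rep_d(Λ)` whose module decomposes as `M_x ≅ ⊕_r M^{(r)}` with `M^{(r)}`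
encoded by a point of `C_r`. -/
def DirectSumSet (s : ℕ) (D : Fin s → Fin Q.n → ℕ)
    (Cs : ∀ r : Fin s, Set (RepSpace Q (D r) K)) : Set (RepSpace Q d K) :=
  {x | ∃ N : Fin s → Submodule K (Carrier Q d K),
    (∀ r, Stable Q d K x (N r)) ∧
    (∀ r, Disjoint (N r) (⨆ t, ⨆ (_ : t ≠ r), N t)) ∧
    (⨆ r, N r) = ⊤ ∧
    ∀ r, ∃ y ∈ Cs r, SubrepIso Q d K (D r) x (N r) y}

/-- The endomorphism space `End_Λ(M_x)` of the module `M_x`. -/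
def endSpace (x : RepSpace Q d K) :
    Submodule K (Carrier Q d K →ₗ[K] Carrier Q d K) where
  carrier := {φ | RepHom Q K d d x x φ}
  add_mem' := by
    intro φ ψ hφ hψ
    exact ⟨fun a => by rw [LinearMap.add_comp, LinearMap.comp_add, hφ.1 a, hψ.1 a],
      fun i => by rw [LinearMap.add_comp, LinearMap.comp_add, hφ.2 i, hψ.2 i]⟩
  zero_mem' := by
    exact ⟨fun a => by simp, fun i => by simp⟩
  smul_mem' := by
    intro c φ hφ
    exact ⟨fun a => by rw [LinearMap.smul_comp, LinearMap.comp_smul, hφ.1 a],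
      fun i => by rw [LinearMap.smul_comp, LinearMap.comp_smul, hφ.2 i]⟩

/-- A word of arrows is a (composable) path when read in function-composition order. -/
def IsPathWord (w : List (Fin Q.numArrows)) : Prop :=
  List.Chain' (fun a b => Q.src a = Q.tgt b) w

/-- The quiver `Q` has no oriented cycles. -/
def Acyclic : Prop :=
  ∀ (a : Fin Q.numArrows) (w : List (Fin Q.numArrows)),
    IsPathWord Q (a :: w) →
      Q.tgt a ≠ Q.src ((a :: w).getLast (List.cons_ne_nil a w))

/-- A filtration `M_x = F 0 ⊇ F 1 ⊇ ⋯ ⊇ F (L+1) = 0` by submodules which is governed by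
the semisimple sequence `S`: each layer `F l / F (l+1)` is semisimple, isomorphic to `S l`. -/
def Governed (L : ℕ) (x : RepSpace Q d K) (S : Fin (L+1) → Fin Q.n → ℕ)
    (F : Fin (L+2) → Submodule K (Carrier Q d K)) : Prop :=
  F 0 = ⊤ ∧ F (Fin.last (L+1)) = ⊥ ∧
  (∀ l : Fin (L+1), F l.succ ≤ F l.castSucc) ∧
  (∀ (l : Fin (L+2)) (i : Fin Q.n), (F l).map (proj Q d K i) ≤ F l) ∧
  (∀ (l : Fin (L+1)) (a : Fin Q.numArrows),
      (F l.castSucc).map (arrowMap Q d K x a) ≤ F l.succ) ∧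
  ∀ (l : Fin (L+1)) (i : Fin Q.n),
      vdim Q d K (F l.castSucc) i = S l i + vdim Q d K (F l.succ) i

/-- `Filt S`: the set of points whose module has a filtration governed by `S`. -/
def FiltSet (L : ℕ) (S : Fin (L+1) → Fin Q.n → ℕ) : Set (RepSpace Q d K) :=
  {x | ∃ F, Governed Q d K L x S F}

/-- `Γ(M_x)`: the number of semisimple sequences which are realizable (i.e. occur as the
radical layering of a module in the variety `P`) and which govern some filtration of `M_x`. -/
noncomputable def gammaCount (L : ℕ) (P : Set (RepSpace Q d K))
    (x : RepSpace Q d K) : ℕ :=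
  Set.ncard {S : Fin (L+1) → Fin Q.n → ℕ |
    (∃ y ∈ P, radLayering Q d K L y = S) ∧ ∃ F, Governed Q d K L x S F}

/-- `Sstar` is the generic (= minimal, attained) socle layering of the modules in `W`. -/
def GenSoc (L : ℕ) (W : Set (RepSpace Q d K))
    (Sstar : Fin (L+1) → Fin Q.n → ℕ) : Prop :=
  (∀ x ∈ W, dominates Sstar (socLayering Q d K L x)) ∧
  ∃ x ∈ W, socLayering Q d K L x = Sstar

end QuiverData

namespace QuiverData

variable (Q : QuiverData)

/-- The `i`-th entry of the row vector `e·A` (over `ℤ`), where `A` is the adjacency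
matrix of `Q`: the sum of `e (src a)` over all arrows `a` ending at `i`. -/
def inflowZ (e : Fin Q.n → ℤ) (i : Fin Q.n) : ℤ :=
  ∑ a ∈ Finset.univ.filter (fun a => Q.tgt a = i), e (Q.src a)

/-- The `i`-th entry of the row vector `e·B` (over `ℤ`), where `B` is the transpose of
the adjacency matrix of `Q`. -/
def outflowZ (e : Fin Q.n → ℤ) (i : Fin Q.n) : ℤ :=
  ∑ a ∈ Finset.univ.filter (fun a => Q.src a = i), e (Q.tgt a)

/-- Partial sums `t⁽⁰⁾ + ⋯ + t⁽ˡ⁾` of the recursion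
`t⁽⁰⁾ = sup{0, d − d·A}`, `t⁽ˡ⁺¹⁾ = sup{0, (d − ∑_{k≤l} t⁽ᵏ⁾) − (d − ∑_{k≤l} t⁽ᵏ⁾)·A}`
(computed componentwise). -/
def cumLayer (dz : Fin Q.n → ℤ) : ℕ → Fin Q.n → ℤ
  | 0 => fun i => max 0 (dz i - inflowZ Q dz i)
  | (l+1) => fun i =>
      cumLayer dz l i +
        max 0 ((dz i - cumLayer dz l i) -
          inflowZ Q (fun j => dz j - cumLayer dz l j) i)

/-- The positive part `∑ᵢ eᵢ fᵢ` of the Euler form of `Q`. -/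
def eulerHomPart (e f : Fin Q.n → ℕ) : ℕ := ∑ i, e i * f i

/-- The negative part `∑_{α} e_{src α} f_{tgt α}` of the Euler form of `Q`, so that
`⟨e, f⟩ = eulerHomPart e f − eulerExtPart e f`. -/
def eulerExtPart (e f : Fin Q.n → ℕ) : ℕ :=
  ∑ a, e (Q.src a) * f (Q.tgt a)

end QuiverData

/-- The quiver with a single vertex and `r` loops. -/
def QuiverData.loopQuiver (r : ℕ) : QuiverData :=
  ⟨1, r, fun _ => 0, fun _ => 0⟩

namespace QuiverData

variable (Q : QuiverData) (d : Fin Q.n → ℕ) (K : Type) [Field K]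

/-- The variety `Rep_d(Λ)` for `Λ = KQ/⟨Rels⟩`, regarded as a topological space with the
(subspace) Zariski topology. -/
abbrev GenV (Rels : Set (FreeAlgebra K (Fin Q.n ⊕ Fin Q.numArrows))) :=
  {y : RepSpace Q d K // y ∈ RepVar Q d K Rels}

/-- The variety `Rep_d(Λ)` for the truncated path algebra
`Λ = KQ/⟨paths of length L+1⟩`, regarded as a topological space. -/
abbrev TruncV (L : ℕ) := {y : RepSpace Q d K // y ∈ TruncRepVar Q d K L}

end QuiverData


namespace QuiverData

variable (Q : QuiverData) (d : Fin Q.n → ℕ)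

/-- Matrix of the arrow `a` over a commutative ring. -/
def arrowMat {R : Type} [CommRing R] (w : Coords Q d → R) (a : Fin Q.numArrows) :
    Matrix (Σ i : Fin Q.n, Fin (d i)) (Σ i : Fin Q.n, Fin (d i)) R :=
  fun p q => if h : p.1 = Q.tgt a ∧ q.1 = Q.src a then
    w ⟨a, (Fin.cast (congrArg d h.1) p.2, Fin.cast (congrArg d h.2) q.2)⟩ else 0

lemma arrowMat_map {R R' : Type} [CommRing R] [CommRing R'] (f : R →+* R')
    (w : Coords Q d → R) (a : Fin Q.numArrows) :
    (arrowMat Q d w a).map f = arrowMat Q d (fun c => f (w c)) a := by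
  ext p q
  simp only [arrowMat, Matrix.map_apply]
  split_ifs <;> simp

lemma arrowMap_eq (K : Type) [Field K] (x : RepSpace Q d K) (a : Fin Q.numArrows)
    (m : Carrier Q d K) : arrowMap Q d K x a m = (arrowMat Q d x a).mulVec m := by
  funext p
  simp only [arrowMap, LinearMap.coe_mk, AddHom.coe_mk, Matrix.mulVec, dotProduct, arrowMat]
  split_ifs with h
  · rw [Fintype.sum_sigma]
    rw [Finset.sum_eq_single (Q.src a)]
    · simp [h]
    · intro b _ hb
      simp [hb]
    · simp
  · simp [h]

/-- Matrix witnesses of a governed filtration. -/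
structure Wit {L : ℕ} (lam : (Σ i : Fin Q.n, Fin (d i)) → Fin (L+1)) {R : Type} [CommRing R]
    (w : Coords Q d → R)
    (g h : Matrix (Σ i : Fin Q.n, Fin (d i)) (Σ i : Fin Q.n, Fin (d i)) R) : Prop where
  gh : g * h = 1
  hg : h * g = 1
  gr : ∀ p q, p.1 ≠ q.1 → g p q = 0
  tri : ∀ a p q, ¬ (lam q < lam p) → (h * arrowMat Q d w a * g) p q = 0

variable {Q d}

lemma Wit.map {L : ℕ} {lam : (Σ i : Fin Q.n, Fin (d i)) → Fin (L+1)} {R R' : Type} [CommRing R]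
    [CommRing R'] (f : R →+* R') {w : Coords Q d → R}
    {g h : Matrix (Σ i : Fin Q.n, Fin (d i)) (Σ i : Fin Q.n, Fin (d i)) R}
    (H : Wit Q d lam w g h) : Wit Q d lam (fun c => f (w c)) (g.map f) (h.map f) where
  gh := by rw [← Matrix.map_mul, H.gh, Matrix.map_one _ f.map_zero f.map_one]
  hg := by rw [← Matrix.map_mul, H.hg, Matrix.map_one _ f.map_zero f.map_one]
  gr p q hpq := by simp [H.gr p q hpq]
  tri a p q hpq := by
    rw [← arrowMat_map, ← Matrix.map_mul, ← Matrix.map_mul]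
    simp [H.tri a p q hpq]

lemma Wit.of_injective {L : ℕ} {lam : (Σ i : Fin Q.n, Fin (d i)) → Fin (L+1)} {R R' : Type}
    [CommRing R]
    [CommRing R'] (f : R →+* R') (hf : Function.Injective f) {w : Coords Q d → R}
    {g h : Matrix (Σ i : Fin Q.n, Fin (d i)) (Σ i : Fin Q.n, Fin (d i)) R}
    (H : Wit Q d lam (fun c => f (w c)) (g.map f) (h.map f)) : Wit Q d lam w g h where
  gh := by
    apply Matrix.map_injective hf
    dsimp only
    rw [Matrix.map_mul, H.gh, Matrix.map_one _ f.map_zero f.map_one]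
  hg := by
    apply Matrix.map_injective hf
    dsimp only
    rw [Matrix.map_mul, H.hg, Matrix.map_one _ f.map_zero f.map_one]
  gr p q hpq := by
    apply hf
    rw [map_zero]
    exact H.gr p q hpq
  tri a p q hpq := by
    apply hf
    rw [map_zero, ← H.tri a p q hpq, ← arrowMat_map, ← Matrix.map_mul, ← Matrix.map_mul]
    simp

variable {K : Type} [Field K]

lemma proj_apply (i : Fin Q.n) (m : Carrier Q d K) (p) :
    proj Q d K i m p = if p.1 = i then m p else 0 := rfl

lemma sum_proj (m : Carrier Q d K) : ∑ i, proj Q d K i m = m := by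
  funext p
  simp [Finset.sum_apply, proj_apply]

lemma proj_proj (i : Fin Q.n) (m : Carrier Q d K) :
    proj Q d K i (proj Q d K i m) = proj Q d K i m := by
  funext p
  simp only [proj_apply]
  split_ifs <;> rfl

/-- Fiber cardinality condition for the level function. -/
def LevelOf {L : ℕ} (S : Fin (L+1) → Fin Q.n → ℕ)
    (lam : (Σ i : Fin Q.n, Fin (d i)) → Fin (L+1)) : Prop :=
  ∃ e : ∀ i, Fin (d i) ≃ (Σ l, Fin (S l i)), ∀ p, lam p = (e p.1 p.2).1

lemma exists_level {L : ℕ} (S : Fin (L+1) → Fin Q.n → ℕ) (hS : hasDimVec S d) :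
    ∃ lam : (Σ i : Fin Q.n, Fin (d i)) → Fin (L+1), LevelOf S lam := by
  have e : ∀ i, Nonempty (Fin (d i) ≃ (Σ l, Fin (S l i))) := fun i => by
    rw [← Fintype.card_eq]
    simp [hS i]
  exact ⟨fun p => ((e p.1).some p.2).1, fun i => (e i).some, fun p => rfl⟩

lemma governed_of_wit {L : ℕ} {S : Fin (L+1) → Fin Q.n → ℕ}
    {lam : (Σ i : Fin Q.n, Fin (d i)) → Fin (L+1)} (hlam : LevelOf S lam)
    {x : RepSpace Q d K} {g h} (H : Wit Q d lam x g h) :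
    ∃ F, Governed Q d K L x S F := by
  classical
  set b : (Σ i : Fin Q.n, Fin (d i)) → Carrier Q d K := fun p => g.col p with hb
  have hli : LinearIndependent K b := by
    have : IsUnit g := ⟨⟨g, h, H.gh, H.hg⟩, rfl⟩
    exact Matrix.linearIndependent_cols_iff_isUnit.2 this
  have hmul : ∀ v, ∑ p, v p • b p = g.mulVec v := by
    intro v
    funext q
    simp [Matrix.mulVec, dotProduct, hb, Matrix.col, Finset.sum_apply, mul_comm]
  have hproj : ∀ i p, proj Q d K i (b p) = if p.1 = i then b p else 0 := by
    intro i p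
    funext q
    rw [proj_apply]
    by_cases h1 : q.1 = i <;> by_cases h2 : p.1 = i
    · simp [h1, h2]
    · simp only [h1, h2, if_true, if_false, Pi.zero_apply]
      exact H.gr q p (fun h3 => h2 (h3 ▸ h1))
    · simp only [h1, h2, if_true, if_false]
      exact (H.gr q p (fun h3 => h1 (h3.trans h2))).symm
    · simp [h1, h2]
  set F : Fin (L+2) → Submodule K (Carrier Q d K) := fun l =>
    Submodule.span K (b '' {p | l ≤ (lam p).castSucc}) with hF
  have hmap : ∀ l i, (F l).map (proj Q d K i) =
      Submodule.span K (b '' {p | l ≤ (lam p).castSucc ∧ p.1 = i}) := by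
    intro l i
    rw [hF, Submodule.map_span]
    apply le_antisymm
    · rw [Submodule.span_le]
      rintro _ ⟨_, ⟨p, hp, rfl⟩, rfl⟩
      rw [hproj]
      split_ifs with h1
      · exact Submodule.subset_span ⟨p, ⟨hp, h1⟩, rfl⟩
      · exact Submodule.zero_mem _
    · apply Submodule.span_mono
      rintro _ ⟨p, hp, rfl⟩
      exact ⟨b p, ⟨p, hp.1, rfl⟩, by rw [hproj, if_pos hp.2]⟩
  have hvd : ∀ l i, vdim Q d K (F l) i =
      (univ.filter fun p : (Σ i : Fin Q.n, Fin (d i)) => l ≤ (lam p).castSucc ∧ p.1 = i).card := by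
    intro l i
    rw [vdim, hmap]
    have : (b '' {p | l ≤ (lam p).castSucc ∧ p.1 = i}) =
      (((univ.filter fun p : (Σ i : Fin Q.n, Fin (d i)) =>
        l ≤ (lam p).castSucc ∧ p.1 = i).image b : Finset _) : Set (Carrier Q d K)) := by
      simp
    rw [this, finrank_span_finset_eq_card, Finset.card_image_of_injective _ hli.injective]
    have h2 := (hli.linearIndepOn_id).mono (t := (((univ.filter fun p : (Σ i : Fin Q.n, Fin (d i)) =>
        l ≤ (lam p).castSucc ∧ p.1 = i).image b : Finset _) : Set (Carrier Q d K))) (by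
          rw [← this]; exact Set.image_subset_range _ _)
    exact h2
  refine ⟨F, ?_, ?_, ?_, ?_, ?_, ?_⟩
  · rw [eq_top_iff]
    intro v _
    have : v = ∑ p, (h.mulVec v) p • b p := by
      rw [hmul, Matrix.mulVec_mulVec, H.gh, Matrix.one_mulVec]
    rw [this]
    exact Submodule.sum_mem _ fun p _ => Submodule.smul_mem _ _
      (Submodule.subset_span ⟨p, Fin.zero_le _, rfl⟩)
  · rw [eq_bot_iff, hF, Submodule.span_le]
    rintro _ ⟨p, hp, rfl⟩
    exact absurd hp (not_le.2 (Fin.castSucc_lt_last _))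
  · intro l
    apply Submodule.span_mono
    apply Set.image_mono
    intro p hp
    exact le_trans (Fin.castSucc_lt_succ).le hp
  · intro l i
    rw [hmap]
    apply Submodule.span_mono
    apply Set.image_mono
    intro p hp
    exact hp.1
  · intro l a
    rw [hF, Submodule.map_span, Submodule.span_le]
    rintro _ ⟨_, ⟨p, hp, rfl⟩, rfl⟩
    rw [arrowMap_eq]
    have : (arrowMat Q d x a).mulVec (b p) =
        ∑ q, (h * arrowMat Q d x a * g) q p • b q := by
      rw [hmul (fun q => (h * arrowMat Q d x a * g) q p)]
      have e1 : (fun q => (h * arrowMat Q d x a * g) q p) =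
        (h * arrowMat Q d x a * g).mulVec (Pi.single p 1) := by
          simp [Matrix.mulVec_single_one]; rfl
      have e2 : b p = g.mulVec (Pi.single p 1) := by simp [Matrix.mulVec_single_one, hb]
      rw [e1, e2, Matrix.mulVec_mulVec, Matrix.mulVec_mulVec, ← mul_assoc, ← mul_assoc, H.gh,
        one_mul]
    rw [this]
    refine Submodule.sum_mem _ fun q _ => ?_
    by_cases hq : lam p < lam q
    · refine Submodule.smul_mem _ _ (Submodule.subset_span ⟨q, ?_, rfl⟩)
      simp only [Set.mem_ofPred_eq, Fin.le_def, Fin.lt_def, Fin.val_succ, Fin.val_castSucc] at *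
      omega
    · rw [H.tri a q p hq, zero_smul]
      exact Submodule.zero_mem _
  · intro l i
    rw [hvd, hvd]
    obtain ⟨e, he⟩ := hlam
    have hS : S l i = (univ.filter fun p : (Σ i : Fin Q.n, Fin (d i)) =>
        lam p = l ∧ p.1 = i).card := by
      rw [← Fintype.card_fin (S l i), ← Finset.card_univ]
      apply Finset.card_bij (fun j _ => (⟨i, (e i).symm ⟨l, j⟩⟩ : Σ i : Fin Q.n, Fin (d i)))
      · intro j _
        simp [he]
      · intro j _ j' _ hj
        simpa using hj
      · rintro ⟨i', v⟩ hv
        simp only [mem_filter, mem_univ, true_and] at hv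
        obtain ⟨hv, rfl⟩ := hv
        rw [he] at hv
        subst hv
        exact ⟨((e i') v).2, mem_univ _, by simp⟩
    rw [hS, ← Finset.card_union_of_disjoint]
    · congr 1
      ext p
      simp only [mem_filter, mem_univ, true_and, mem_union, Fin.le_def, Fin.val_succ,
        Fin.val_castSucc, Fin.ext_iff]
      omega
    · rw [Finset.disjoint_filter]
      intro p _ h1 h2
      have := h2.1
      rw [h1.1] at this
      simp [Fin.le_def] at this

lemma exists_compl_fam (P' P : Submodule K (Carrier Q d K)) (hle : P' ≤ P) (s : ℕ)
    (hs : Module.finrank K P = s + Module.finrank K P') :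
    ∃ c : Fin s → Carrier Q d K, (∀ j, c j ∈ P) ∧ P ≤ P' ⊔ Submodule.span K (Set.range c) := by
  obtain ⟨C0, hC0⟩ := exists_isCompl P'
  have h1 : P' ⊔ (C0 ⊓ P) = P := by
    rw [← sup_inf_assoc_of_le _ hle, hC0.sup_eq_top, top_inf_eq]
  have h2 : P' ⊓ (C0 ⊓ P) = ⊥ := by
    rw [← inf_assoc, hC0.inf_eq_bot, bot_inf_eq]
  have h3 := Submodule.finrank_sup_add_finrank_inf_eq P' (C0 ⊓ P)
  rw [h1, h2, finrank_bot] at h3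
  have h4 : Module.finrank K (C0 ⊓ P : Submodule K (Carrier Q d K)) = s := by omega
  let bb := Module.finBasisOfFinrankEq K (C0 ⊓ P : Submodule K (Carrier Q d K)) h4
  refine ⟨fun j => (bb j : Carrier Q d K), fun j => (bb j).2.2, ?_⟩
  have h5 : Submodule.span K (Set.range fun j => (bb j : Carrier Q d K)) = C0 ⊓ P := by
    have := congrArg (Submodule.map (Submodule.subtype _)) bb.span_eq
    rw [Submodule.map_span, Submodule.map_top, Submodule.range_subtype, ← Set.range_comp] at this
    exact this
  rw [h5, h1]

lemma wit_of_governed {L : ℕ} {S : Fin (L+1) → Fin Q.n → ℕ}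
    {lam : (Σ i : Fin Q.n, Fin (d i)) → Fin (L+1)} (hlam : LevelOf S lam)
    {x : RepSpace Q d K} {F} (H : Governed Q d K L x S F) :
    ∃ g h, Wit Q d lam x g h := by
  classical
  obtain ⟨htop, hbot, hmono, hgr, harr, hdim⟩ := H
  obtain ⟨e, he⟩ := hlam
  have hc : ∀ (l : Fin (L+1)) (i : Fin Q.n), ∃ c : Fin (S l i) → Carrier Q d K,
      (∀ j, c j ∈ (F l.castSucc).map (proj Q d K i)) ∧ (F l.castSucc).map (proj Q d K i) ≤
        (F l.succ).map (proj Q d K i) ⊔ Submodule.span K (Set.range c) := fun l i =>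
    exists_compl_fam _ _ (Submodule.map_mono (hmono l)) _ (hdim l i)
  choose c hcm hcs using hc
  set b : (Σ i : Fin Q.n, Fin (d i)) → Carrier Q d K :=
    fun p => c (e p.1 p.2).1 p.1 (e p.1 p.2).2 with hb
  have hbm : ∀ p, b p ∈ (F (lam p).castSucc).map (proj Q d K p.1) := fun p => by
    rw [he]; exact hcm _ _ _
  have hbF : ∀ p, b p ∈ F (lam p).castSucc := fun p => hgr _ _ (hbm p)
  have hFs : ∀ l, F l ≤ Submodule.span K (b '' {p | l ≤ (lam p).castSucc}) := by
    intro l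
    induction l using Fin.reverseInduction with
    | last => rw [hbot]; exact bot_le
    | cast l ih =>
      have hle : Submodule.span K (b '' {p | l.succ ≤ (lam p).castSucc}) ≤
          Submodule.span K (b '' {p | l.castSucc ≤ (lam p).castSucc}) :=
        Submodule.span_mono (Set.image_mono fun p hp => le_trans (Fin.castSucc_lt_succ).le hp)
      intro m hm
      rw [← sum_proj m]
      refine Submodule.sum_mem _ fun i _ => ?_
      have h1 := hcs l i (Submodule.mem_map_of_mem hm)
      refine (sup_le ?_ ?_ : _ ≤ Submodule.span K (b '' {p | l.castSucc ≤ (lam p).castSucc})) h1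
      · exact ((hgr _ _).trans ih).trans hle
      · rw [Submodule.span_le]
        rintro _ ⟨j, rfl⟩
        refine Submodule.subset_span ⟨⟨i, (e i).symm ⟨l, j⟩⟩, ?_, ?_⟩
        · simp [he]
        · simp only [hb]
          rw [Equiv.apply_symm_apply]
  have hspan : ⊤ ≤ Submodule.span K (Set.range b) := by
    rw [← htop]
    exact (hFs 0).trans (Submodule.span_mono (Set.image_subset_range _ _))
  have hli : LinearIndependent K b :=
    linearIndependent_of_top_le_span_of_card_eq_finrank hspan (by simp)
  set g : Matrix (Σ i : Fin Q.n, Fin (d i)) (Σ i : Fin Q.n, Fin (d i)) K :=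
    Matrix.of fun p q => b q p with hg
  have hu : IsUnit g := Matrix.linearIndependent_cols_iff_isUnit.1 hli
  obtain ⟨⟨g', h, h1, h2⟩, hg'⟩ := hu
  replace hg : g' = Matrix.of fun p q => b q p := hg'
  have hcoord : ∀ l m, m ∈ F l → ∀ p, ¬ (l ≤ (lam p).castSucc) → h.mulVec m p = 0 := by
    intro l m hm p hp
    have := hFs l hm
    clear hm
    induction this using Submodule.span_induction with
    | mem m hm' =>
      obtain ⟨q, hq, rfl⟩ := hm'
      have e2 : b q = g'.mulVec (Pi.single q 1) := by
        rw [hg]; ext p; simp [Matrix.mulVec_single_one, Matrix.col]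
      rw [e2, Matrix.mulVec_mulVec, h2, Matrix.one_mulVec, Pi.single_apply, if_neg]
      rintro rfl
      exact hp hq
    | zero => simp
    | add u v _ _ h1 h2 => rw [Matrix.mulVec_add, Pi.add_apply, h1, h2, add_zero]
    | smul r u _ h1 => rw [Matrix.mulVec_smul, Pi.smul_apply, h1, smul_zero]
  refine ⟨g', h, h1, h2, ?_, ?_⟩
  · intro p q hpq
    obtain ⟨m, _, hm⟩ := hbm q
    rw [hg, Matrix.of_apply, ← hm, proj_apply, if_neg hpq]
  · intro a p q hpq
    have e1 : (h * arrowMat Q d x a * g') p q = h.mulVec (arrowMap Q d K x a (b q)) p := by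
      rw [arrowMap_eq, Matrix.mulVec_mulVec, Matrix.mul_apply]
      simp [Matrix.mulVec, dotProduct, hg]
    rw [e1]
    apply hcoord (lam q).succ _ (harr (lam q) a (Submodule.mem_map_of_mem (hbF q)))
    simp only [Fin.le_def, Fin.lt_def, Fin.val_succ, Fin.val_castSucc] at *
    omega

end QuiverData


namespace QuiverData

section Red

variable {F : Type} [Field F] (V : ValuationSubring F) {I : Type} [Fintype I]

/-- Reduction of a subspace of `F^I` modulo the maximal ideal of the valuation ring. -/
def redSub (U : Submodule F (I → F)) : Submodule (IsLocalRing.ResidueField V)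
    (I → IsLocalRing.ResidueField V) where
  carrier := {z | ∃ y : I → V, (fun p => (y p : F)) ∈ U ∧ ∀ p, IsLocalRing.residue V (y p) = z p}
  add_mem' := by
    rintro _ _ ⟨y, hy, h⟩ ⟨y', hy', h'⟩
    exact ⟨y + y', U.add_mem hy hy', fun p => by simp [← h, ← h']⟩
  zero_mem' := ⟨0, U.zero_mem, fun p => by simp⟩
  smul_mem' := by
    rintro c _ ⟨y, hy, h⟩
    obtain ⟨c, rfl⟩ := IsLocalRing.residue_surjective c
    exact ⟨c • y, U.smul_mem (c : F) hy, fun p => by simp [← h]⟩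

lemma mem_redSub {U : Submodule F (I → F)} {z : I → IsLocalRing.ResidueField V} :
    z ∈ redSub V U ↔
      ∃ y : I → V, (fun p => (y p : F)) ∈ U ∧ ∀ p, IsLocalRing.residue V (y p) = z p := Iff.rfl

lemma redSub_mono {U U' : Submodule F (I → F)} (h : U ≤ U') : redSub V U ≤ redSub V U' := by
  rintro z ⟨y, hy, hz⟩
  exact ⟨y, h hy, hz⟩

lemma exists_normalized (u : I → F) (hu : u ≠ 0) :
    ∃ (c : F) (j : I) (y : I → V), y j = 1 ∧ ∀ p, (y p : F) = c * u p := by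
  have hne : Nonempty I := by
    by_contra h
    rw [not_nonempty_iff] at h
    exact hu (Subsingleton.elim _ _)
  obtain ⟨j, hj⟩ := Finite.exists_max (fun p => V.valuation (u p))
  have huj : u j ≠ 0 := by
    intro h
    apply hu
    funext p
    have := hj p
    rw [h, map_zero] at this
    simpa using this
  refine ⟨(u j)⁻¹, j, fun p => ⟨(u j)⁻¹ * u p, ?_⟩, ?_, fun p => rfl⟩
  · rw [← V.valuation_le_one_iff, map_mul, map_inv₀]
    have h0 : V.valuation (u j) ≠ 0 := by simpa using huj
    calc _ ≤ (V.valuation (u j))⁻¹ * V.valuation (u j) := by gcongr; exact hj p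
      _ = 1 := inv_mul_cancel₀ h0
  · ext
    simp [huj]

lemma finrank_split {k : Type} [Field k] (W W' : Submodule k (I → k)) (j : I) (u : I → k)
    (hu : u ∈ W) (huj : u j = 1) (hW : ∀ z, z ∈ W' ↔ z ∈ W ∧ z j = 0) :
    Module.finrank k W = Module.finrank k W' + 1 := by
  have hle : W' ⊔ Submodule.span k {u} = W := by
    apply le_antisymm
    · refine sup_le (fun z hz => ((hW z).1 hz).1) ?_
      rw [Submodule.span_singleton_le_iff_mem]; exact hu
    · intro z hz
      have : z = (z - z j • u) + z j • u := by simp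
      rw [this]
      refine Submodule.add_mem_sup ((hW _).2 ⟨W.sub_mem hz (W.smul_mem _ hu), by simp [huj]⟩)
        (Submodule.smul_mem _ _ (Submodule.mem_span_singleton_self u))
  have hinf : W' ⊓ Submodule.span k {u} = ⊥ := by
    rw [eq_bot_iff]
    rintro z ⟨hz, hz'⟩
    obtain ⟨c, rfl⟩ := Submodule.mem_span_singleton.1 hz'
    have := ((hW _).1 hz).2
    simp [huj] at this
    simp [this]
  have h := Submodule.finrank_sup_add_finrank_inf_eq W' (Submodule.span k {u})
  rw [hle, hinf, finrank_bot, finrank_span_singleton] at h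
  · omega
  · rintro rfl; simp at huj

lemma finrank_redSub (U : Submodule F (I → F)) :
    Module.finrank (IsLocalRing.ResidueField V) (redSub V U) = Module.finrank F U := by
  induction hn : Module.finrank F U generalizing U with
  | zero =>
    have : U = ⊥ := Submodule.finrank_eq_zero.1 hn
    subst this
    have : redSub V (⊥ : Submodule F (I → F)) = ⊥ := by
      rw [eq_bot_iff]
      rintro z ⟨y, hy, hz⟩
      rw [Submodule.mem_bot] at hy ⊢
      funext p
      rw [← hz p]
      have h1 : (y p : F) = 0 := congrFun hy p
      have h2 : y p = 0 := by ext; exact h1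
      simp [h2]
    rw [this, finrank_bot]
  | succ n ih =>
    have hU : U ≠ ⊥ := by
      rintro rfl
      simp at hn
    obtain ⟨u, hu, hu0⟩ := Submodule.exists_mem_ne_zero_of_ne_bot hU
    obtain ⟨c, j, y, hyj, hy⟩ := exists_normalized V u hu0
    have hyU : (fun p => (y p : F)) ∈ U := by
      have : (fun p => (y p : F)) = c • u := by funext p; simp [hy]
      rw [this]; exact U.smul_mem _ hu
    let U' : Submodule F (I → F) := U ⊓ LinearMap.ker (LinearMap.proj j : (I → F) →ₗ[F] F)
    have h1 := finrank_split U U' j (fun p => (y p : F)) hyU (by simp [hyj])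
      (fun z => by simp [U'])
    have h2 := finrank_split (redSub V U) (redSub V U') j
      (fun p => IsLocalRing.residue V (y p)) ⟨y, hyU, fun p => rfl⟩ (by simp [hyj]) (by
        intro z
        constructor
        · rintro ⟨y', hy', hz⟩
          refine ⟨⟨y', hy'.1, hz⟩, ?_⟩
          have h3 : (y' j : F) = 0 := by simpa using hy'.2
          have h4 : y' j = 0 := by ext; exact h3
          rw [← hz, h4, map_zero]
        · rintro ⟨⟨y', hy', hz⟩, hzj⟩
          refine ⟨y' - y' j • y, ⟨U.sub_mem hy' (U.smul_mem (y' j : F) hyU), ?_⟩, ?_⟩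
          · simp [hyj]
          · intro p
            have := hz j
            rw [hzj] at this
            simp [← hz p, this])
    rw [h2, ih U' (by omega)]

end Red

variable {Q : QuiverData} {d : Fin Q.n → ℕ}

lemma governed_red {L : ℕ} {S : Fin (L+1) → Fin Q.n → ℕ} {F : Type} [Field F]
    (V : ValuationSubring F) (w : Coords Q d → V) {Fil}
    (H : Governed Q d F L (fun c => (w c : F)) S Fil) :
    Governed Q d (IsLocalRing.ResidueField V) L (fun c => IsLocalRing.residue V (w c)) S
      (fun l => redSub V (Fil l)) := by
  obtain ⟨htop, hbot, hmono, hgr, harr, hdim⟩ := H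
  have hgr' : ∀ (l : Fin (L+2)) (i : Fin Q.n),
      (redSub V (Fil l)).map (proj Q d _ i) = redSub V ((Fil l).map (proj Q d F i)) := by
    intro l i
    apply le_antisymm
    · rintro _ ⟨z, ⟨y, hy, hz⟩, rfl⟩
      refine ⟨fun p => if p.1 = i then y p else 0, ⟨_, hy, ?_⟩, ?_⟩
      · funext p
        rw [proj_apply]
        by_cases hp : p.1 = i <;> simp [hp]
      · intro p
        rw [proj_apply]
        by_cases hp : p.1 = i <;> simp [hp, hz]
    · rintro z ⟨y, hy, hz⟩
      refine ⟨z, ⟨y, hgr l i hy, hz⟩, ?_⟩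
      obtain ⟨m, hm, hmy⟩ := hy
      funext p
      rw [proj_apply]
      split_ifs with hp
      · rfl
      · have := congrFun hmy p
        rw [proj_apply, if_neg hp] at this
        have h0 : y p = 0 := by ext; exact this.symm
        rw [← hz, h0, map_zero]
  have hvd : ∀ l i, vdim Q d (IsLocalRing.ResidueField V) (redSub V (Fil l)) i =
      vdim Q d F (Fil l) i := by
    intro l i
    rw [vdim, hgr', finrank_redSub, vdim]
  refine ⟨?_, ?_, fun l => redSub_mono V (hmono l), ?_, ?_, ?_⟩
  · dsimp only
    rw [htop, eq_top_iff]
    intro z _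
    choose y hy using fun p => IsLocalRing.residue_surjective (R := V) (z p)
    exact ⟨y, trivial, hy⟩
  · have := finrank_redSub V (Fil (Fin.last (L+1)))
    rw [hbot, finrank_bot] at this
    dsimp only
    rw [hbot]
    exact Submodule.finrank_eq_zero.1 this
  · intro l i
    rw [hgr']
    exact redSub_mono V (hgr l i)
  · rintro l a _ ⟨z, ⟨y, hy, hz⟩, rfl⟩
    refine ⟨(arrowMat Q d w a).mulVec y, ?_, ?_⟩
    · have := harr l a (Submodule.mem_map_of_mem hy)
      rw [arrowMap_eq] at this
      convert this using 1
      funext p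
      have h1 := RingHom.map_mulVec V.subtype (arrowMat Q d w a) y p
      rw [arrowMat_map] at h1
      exact h1
    · intro p
      rw [RingHom.map_mulVec, arrowMat_map, arrowMap_eq]
      have : (IsLocalRing.residue V ∘ y) = z := funext hz
      rw [this]
  · intro l i
    rw [hvd, hvd]
    exact hdim l i

lemma exists_algHom_of_finiteType (K B : Type) [Field K] [IsAlgClosed K] [CommRing B]
    [Nontrivial B] [Algebra K B] [Algebra.FiniteType K B] : Nonempty (B →ₐ[K] K) := by
  obtain ⟨m, hm⟩ := Ideal.exists_maximal B
  let : Field (B ⧸ m) := Ideal.Quotient.field m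
  have : Module.Finite K (B ⧸ m) := finite_of_finite_type_of_isJacobsonRing K (B ⧸ m)
  have hb := IsAlgClosed.algebraMap_bijective_of_isIntegral (k := K) (K := B ⧸ m)
  exact ⟨((AlgEquiv.ofBijective (Algebra.ofId K (B ⧸ m)) hb).symm : (B ⧸ m) →ₐ[K] K).comp
    (Ideal.Quotient.mkₐ K m)⟩

lemma wit_descent {K : Type} [Field K] [IsAlgClosed K] {L : ℕ}
    {lam : (Σ i : Fin Q.n, Fin (d i)) → Fin (L+1)} {k : Type} [Field k] (φ : K →+* k)
    (x : Coords Q d → K) {g h} (H : Wit Q d lam (fun c => φ (x c)) g h) :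
    ∃ g h, Wit Q d lam x g h := by
  classical
  let := φ.toAlgebra
  let s : Set k := Set.range (fun pq : (Σ i : Fin Q.n, Fin (d i)) × (Σ i : Fin Q.n, Fin (d i)) =>
    g pq.1 pq.2) ∪ Set.range (fun pq : (Σ i : Fin Q.n, Fin (d i)) × (Σ i : Fin Q.n, Fin (d i)) =>
    h pq.1 pq.2)
  have hs : s.Finite := (Set.finite_range _).union (Set.finite_range _)
  let B := Algebra.adjoin K s
  have : Algebra.FiniteType K B := by
    rw [← Subalgebra.fg_iff_finiteType]
    exact Subalgebra.fg_def.2 ⟨s, hs, rfl⟩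
  let g' : Matrix (Σ i : Fin Q.n, Fin (d i)) (Σ i : Fin Q.n, Fin (d i)) B :=
    fun p q => ⟨g p q, Algebra.subset_adjoin (Or.inl ⟨(p, q), rfl⟩)⟩
  let h' : Matrix (Σ i : Fin Q.n, Fin (d i)) (Σ i : Fin Q.n, Fin (d i)) B :=
    fun p q => ⟨h p q, Algebra.subset_adjoin (Or.inr ⟨(p, q), rfl⟩)⟩
  have H' : Wit Q d lam (fun c => algebraMap K B (x c)) g' h' :=
    Wit.of_injective (B.val : B →+* k) Subtype.val_injective H
  obtain ⟨ψ⟩ := exists_algHom_of_finiteType K B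
  have H2 := H'.map (ψ : B →+* K)
  have e : (fun c => (ψ : B →+* K) (algebraMap K B (x c))) = x := by
    funext c
    simp
  rw [e] at H2
  exact ⟨_, _, H2⟩

lemma Wit.of_jointly {L : ℕ} {lam : (Σ i : Fin Q.n, Fin (d i)) → Fin (L+1)} {R R' Y : Type}
    [CommRing R] [CommRing R'] (f : Y → R →+* R') (hf : ∀ r s, (∀ y, f y r = f y s) → r = s)
    {w : Coords Q d → R}
    {g h : Matrix (Σ i : Fin Q.n, Fin (d i)) (Σ i : Fin Q.n, Fin (d i)) R}
    (H : ∀ y, Wit Q d lam (fun c => f y (w c)) (g.map (f y)) (h.map (f y))) :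
    Wit Q d lam w g h := by
  have key : ∀ (A B : Matrix (Σ i : Fin Q.n, Fin (d i)) (Σ i : Fin Q.n, Fin (d i)) R),
      (∀ y, A.map (f y) = B.map (f y)) → A = B := by
    intro A B hAB
    ext p q
    exact hf _ _ fun y => congrFun (congrFun (hAB y) p) q
  refine ⟨?_, ?_, ?_, ?_⟩
  · apply key
    intro y
    rw [Matrix.map_mul, (H y).gh, Matrix.map_one _ (map_zero _) (map_one _)]
  · apply key
    intro y
    rw [Matrix.map_mul, (H y).hg, Matrix.map_one _ (map_zero _) (map_one _)]
  · intro p q hpq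
    refine hf _ _ fun y => ?_
    rw [map_zero]
    exact (H y).gr p q hpq
  · intro a p q hpq
    refine hf _ _ fun y => ?_
    rw [map_zero, ← (H y).tri a p q hpq, ← arrowMat_map, ← Matrix.map_mul, ← Matrix.map_mul]
    simp

lemma specialize {K : Type} [Field K] [IsAlgClosed K] {L : ℕ} {S : Fin (L+1) → Fin Q.n → ℕ}
    {lam : (Σ i : Fin Q.n, Fin (d i)) → Fin (L+1)} (hlam : LevelOf S lam)
    {F : Type} [Field F] (θ : MvPolynomial (Coords Q d) K →+* F) (x : RepSpace Q d K)
    (hθ : ∀ p, MvPolynomial.eval x p ≠ 0 → θ p ≠ 0) {g h}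
    (H : Wit Q d lam (fun c => θ (MvPolynomial.X c)) g h) :
    x ∈ FiltSet Q d K L S := by
  let mx : Ideal (MvPolynomial (Coords Q d) K) :=
    RingHom.ker (MvPolynomial.eval x : MvPolynomial (Coords Q d) K →+* K)
  have hmx : mx.IsPrime := RingHom.ker_isPrime _
  have hτ : ∀ p : mx.primeCompl, IsUnit (θ p) := by
    intro p
    rw [isUnit_iff_ne_zero]
    exact hθ p p.2
  let f : Localization.AtPrime mx →+* F := IsLocalization.lift hτ
  obtain ⟨V, hV, hloc⟩ := IsLocalRing.exists_factor_valuationRing f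
  let fV : Localization.AtPrime mx →+* V := f.codRestrict V.toSubring hV
  let jV : MvPolynomial (Coords Q d) K →+* V :=
    fV.comp (algebraMap _ (Localization.AtPrime mx))
  have hjV : ∀ p, (jV p : F) = θ p := fun p => IsLocalization.lift_eq hτ p
  let φ : K →+* IsLocalRing.ResidueField V :=
    (IsLocalRing.residue V).comp (jV.comp MvPolynomial.C)
  obtain ⟨Fil, hFil⟩ := governed_of_wit hlam H
  have hw : (fun c => θ (MvPolynomial.X c)) = fun c => (jV (MvPolynomial.X c) : F) := by
    funext c
    rw [hjV]
  rw [hw] at hFil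
  have h1 := governed_red V (fun c => jV (MvPolynomial.X c)) hFil
  have h2 : (fun c => IsLocalRing.residue V (jV (MvPolynomial.X c))) = fun c => φ (x c) := by
    funext c
    rw [← sub_eq_zero]
    change IsLocalRing.residue V _ - IsLocalRing.residue V (jV (MvPolynomial.C (x c))) = 0
    rw [← map_sub, ← map_sub, IsLocalRing.residue_eq_zero_iff, IsLocalRing.mem_maximalIdeal,
      mem_nonunits_iff]
    intro hu
    have hu2 : IsUnit (algebraMap _ (Localization.AtPrime mx)
      (MvPolynomial.X c - MvPolynomial.C (x c))) := hloc.map_nonunit _ hu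
    rw [IsLocalization.AtPrime.isUnit_to_map_iff (Localization.AtPrime mx) mx] at hu2
    exact hu2 (by simp [mx, RingHom.mem_ker])
  rw [h2] at h1
  obtain ⟨g1, h1', hw1⟩ := wit_of_governed hlam h1
  obtain ⟨g2, h2', hw2⟩ := wit_descent φ x hw1
  exact governed_of_wit hlam hw2

/-- `Filt S` is Zariski closed. -/
lemma filtSet_closed {K : Type} [Field K] [IsAlgClosed K] {L : ℕ} (S : Fin (L+1) → Fin Q.n → ℕ)
    (hS : hasDimVec S d) (W : Set (RepSpace Q d K)) (hW : W ⊆ FiltSet Q d K L S)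
    (x : RepSpace Q d K)
    (hx : ∀ p : MvPolynomial (Coords Q d) K, MvPolynomial.eval x p ≠ 0 →
      ∃ y ∈ W, MvPolynomial.eval y p ≠ 0) :
    x ∈ FiltSet Q d K L S := by
  obtain ⟨lam, hlam⟩ := exists_level S hS
  have hw : ∀ y : W, ∃ g h, Wit Q d lam y.1 g h := fun y => by
    obtain ⟨F, hF⟩ := hW y.2
    exact wit_of_governed hlam hF
  choose g h hgh using hw
  let ev : MvPolynomial (Coords Q d) K →+* (W → K) :=
    RingHom.pi fun y : W => (MvPolynomial.eval y.1 : MvPolynomial (Coords Q d) K →+* K)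
  have HR : Wit Q d lam (R := W → K) (fun c => ev (MvPolynomial.X c))
      (Matrix.of fun p q y => g y p q) (Matrix.of fun p q y => h y p q) := by
    refine Wit.of_jointly (Pi.evalRingHom (fun _ : W => K)) (fun r s hrs => funext hrs) ?_
    intro y
    have e1 : (fun c => Pi.evalRingHom (fun _ : W => K) y (ev (MvPolynomial.X c))) = y.1 := by
      funext c
      simp [ev]
    rw [e1]
    exact hgh y
  let mx : Ideal (MvPolynomial (Coords Q d) K) :=
    RingHom.ker (MvPolynomial.eval x : MvPolynomial (Coords Q d) K →+* K)
  have hmx : mx.IsPrime := RingHom.ker_isPrime _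
  obtain ⟨P, hP, -, hdis⟩ := Ideal.exists_le_prime_disjoint (⊥ : Ideal (W → K))
    (mx.primeCompl.map ev) (by
      rw [Set.disjoint_left]
      rintro f hf ⟨p, hp, rfl⟩
      obtain ⟨y, hy, hyp⟩ := hx p hp
      exact hyp (congrFun (hf : ev p = 0) ⟨y, hy⟩))
  let τ : (W → K) →+* FractionRing ((W → K) ⧸ P) :=
    (algebraMap ((W → K) ⧸ P) (FractionRing ((W → K) ⧸ P))).comp (Ideal.Quotient.mk P)
  refine specialize hlam (τ.comp ev) x ?_ (HR.map τ)
  intro p hp h0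
  have h1 : Ideal.Quotient.mk P (ev p) = 0 :=
    (IsFractionRing.injective ((W → K) ⧸ P) (FractionRing ((W → K) ⧸ P)))
      (by rw [map_zero]; exact h0)
  rw [Ideal.Quotient.eq_zero_iff_mem] at h1
  exact Set.disjoint_left.1 hdis h1 ⟨p, hp, rfl⟩

end QuiverData


namespace QuiverData

variable {Q : QuiverData} {d : Fin Q.n → ℕ} {K : Type} [Field K]

lemma radPow_zero (x : RepSpace Q d K) : radPow Q d K x 0 = ⊤ := by
  rw [eq_top_iff, radPow]
  refine le_trans ?_ (le_iSup _ ⟨[], rfl⟩)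
  simp [wordMap, Module.End.one_eq_id]

lemma radPow_succ_le (x : RepSpace Q d K) (l : ℕ) :
    radPow Q d K x (l+1) ≤ radPow Q d K x l := by
  rw [radPow]
  refine iSup_le ?_
  rintro ⟨w, hw⟩
  have hne : w ≠ [] := by rintro rfl; simp at hw
  have hlen : w.dropLast.length = l := by simp [hw]
  have hsp : wordMap Q d K x w = wordMap Q d K x (w.dropLast ++ [w.getLast hne]) := by
    rw [List.dropLast_append_getLast hne]
  dsimp only
  rw [hsp]
  refine le_trans ?_ (le_iSup (fun w : {w : List (Fin Q.numArrows) // w.length = l} =>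
    LinearMap.range (wordMap Q d K x w.1)) ⟨w.dropLast, hlen⟩)
  rw [wordMap, List.map_append, List.prod_append]
  exact LinearMap.range_comp_le_range _ _

lemma radPow_succ (x : RepSpace Q d K) (l : ℕ) :
    radPow Q d K x (l+1) = ⨆ a, (radPow Q d K x l).map (arrowMap Q d K x a) := by
  apply le_antisymm
  · rw [radPow]
    refine iSup_le ?_
    rintro ⟨w, hw⟩
    cases w with
    | nil => simp at hw
    | cons a w =>
      have hw' : w.length = l := by simpa using hw
      refine le_trans ?_ (le_iSup _ a)
      dsimp only
      rw [wordMap, List.map_cons, List.prod_cons, Module.End.mul_eq_comp, LinearMap.range_comp]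
      exact Submodule.map_mono (le_iSup (fun w : {w : List (Fin Q.numArrows) // w.length = l} =>
        LinearMap.range (wordMap Q d K x w.1)) ⟨w, hw'⟩)
  · refine iSup_le fun a => ?_
    rw [radPow, Submodule.map_iSup]
    refine iSup_le ?_
    rintro ⟨w, hw⟩
    rw [← LinearMap.range_comp]
    refine le_trans ?_ (le_iSup (fun w : {w : List (Fin Q.numArrows) // w.length = l + 1} =>
      LinearMap.range (wordMap Q d K x w.1)) ⟨a :: w, by simp [hw]⟩)
    dsimp only
    rw [wordMap, wordMap, List.map_cons, List.prod_cons, Module.End.mul_eq_comp]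

lemma radPow_arrow (x : RepSpace Q d K) (l : ℕ) (a : Fin Q.numArrows) :
    (radPow Q d K x l).map (arrowMap Q d K x a) ≤ radPow Q d K x (l+1) := by
  rw [radPow_succ]
  exact le_iSup (fun a => (radPow Q d K x l).map (arrowMap Q d K x a)) a

lemma proj_arrow (x : RepSpace Q d K) (i : Fin Q.n) (a : Fin Q.numArrows) (m) :
    proj Q d K i (arrowMap Q d K x a m) = if Q.tgt a = i then arrowMap Q d K x a m else 0 := by
  funext p
  rw [proj_apply]
  by_cases h1 : p.1 = Q.tgt a
  · rw [h1]; split_ifs <;> rfl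
  · have : arrowMap Q d K x a m p = 0 := by simp [arrowMap, h1]
    split_ifs <;> simp [this]

lemma radPow_graded (x : RepSpace Q d K) (l : ℕ) (i : Fin Q.n) :
    (radPow Q d K x l).map (proj Q d K i) ≤ radPow Q d K x l := by
  cases l with
  | zero => rw [radPow_zero]; exact le_top
  | succ l =>
    rw [radPow_succ, Submodule.map_iSup]
    refine iSup_le fun a => ?_
    refine le_trans ?_ (le_iSup (fun a => (radPow Q d K x l).map (arrowMap Q d K x a)) a)
    rintro _ ⟨_, ⟨m, hm, rfl⟩, rfl⟩
    rw [proj_arrow]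
    split_ifs
    · exact ⟨m, hm, rfl⟩
    · exact Submodule.zero_mem _

lemma radPow_top (x : RepSpace Q d K) (L : ℕ)
    (h : ∀ w : List (Fin Q.numArrows), w.length = L + 1 → wordMap Q d K x w = 0) :
    radPow Q d K x (L+1) = ⊥ := by
  rw [eq_bot_iff, radPow]
  refine iSup_le ?_
  rintro ⟨w, hw⟩
  simp [h w hw]

lemma vdim_mono {N N' : Submodule K (Carrier Q d K)} (h : N ≤ N') (i) :
    vdim Q d K N i ≤ vdim Q d K N' i :=
  Submodule.finrank_mono (Submodule.map_mono h)

lemma radPow_anti (x : RepSpace Q d K) : Antitone (radPow Q d K x) :=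
  antitone_nat_of_succ_le (radPow_succ_le x)

lemma governed_rad (x : RepSpace Q d K) (L : ℕ)
    (h : ∀ w : List (Fin Q.numArrows), w.length = L + 1 → wordMap Q d K x w = 0) :
    Governed Q d K L x (radLayering Q d K L x) (fun l => radPow Q d K x l) := by
  refine ⟨radPow_zero x, ?_, fun l => ?_, fun l i => radPow_graded x l i, fun l a => ?_, ?_⟩
  · exact radPow_top x L h
  · simpa using radPow_succ_le x l
  · simpa using radPow_arrow x l a
  · intro l i
    have := vdim_mono (radPow_succ_le x l) i
    simp only [radLayering, Fin.val_castSucc, Fin.val_succ]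
    omega

lemma vdim_top (i : Fin Q.n) : vdim Q d K ⊤ i = d i := by
  classical
  rw [vdim, Submodule.map_top]
  let f : (Fin (d i) → K) →ₗ[K] Carrier Q d K :=
    { toFun := fun v p => if h : p.1 = i then v (Fin.cast (congrArg d h) p.2) else 0
      map_add' := by
        intro u v; funext p; by_cases h : p.1 = i <;> simp [h]
      map_smul' := by
        intro u v; funext p; by_cases h : p.1 = i <;> simp [h] }
  have hf : Function.Injective f := by
    intro u v huv
    funext j
    have := congrFun huv ⟨i, j⟩
    simpa [f] using this
  have hr : LinearMap.range (proj Q d K i) = LinearMap.range f := by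
    apply le_antisymm
    · rintro _ ⟨m, rfl⟩
      refine ⟨fun j => m ⟨i, j⟩, ?_⟩
      funext ⟨i', j⟩
      rw [proj_apply]
      by_cases h : i' = i
      · subst h; simp [f]
      · simp [f, h]
    · rintro _ ⟨v, rfl⟩
      refine ⟨f v, ?_⟩
      funext p
      rw [proj_apply]
      by_cases h : p.1 = i <;> simp [f, h]
  rw [hr, LinearMap.finrank_range_of_inj hf]
  simp

lemma hasDimVec_of_governed {L : ℕ} {x : RepSpace Q d K} {S : Fin (L+1) → Fin Q.n → ℕ} {F}
    (H : Governed Q d K L x S F) : hasDimVec S d := by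
  intro i
  obtain ⟨htop, hbot, -, -, -, hdim⟩ := H
  have key : ∀ (n : ℕ) (s : Fin n → ℕ) (v : Fin (n+1) → ℕ),
      (∀ l : Fin n, v l.castSucc = s l + v l.succ) → v 0 = ∑ l, s l + v (Fin.last n) := by
    intro n
    induction n with
    | zero => intro s v _; simp
    | succ n ih =>
      intro s v hv
      have h1 := ih (fun l => s l.succ) (fun l => v l.succ) (fun l => hv l.succ)
      have h2 := hv 0
      rw [Fin.sum_univ_succ]
      simp only [Fin.castSucc_zero, Fin.succ_last, Nat.succ_eq_add_one] at h1 h2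
      omega
  have := key _ (fun l => S l i) (fun l => vdim Q d K (F l) i) (fun l => hdim l i)
  simp only [htop, hbot, vdim_top] at this
  rw [this]
  simp [vdim]

lemma mem_closure_eval {W : Set (RepSpace Q d K)} {x : RepSpace Q d K} (hx : x ∈ closure W)
    (p : MvPolynomial (Coords Q d) K) (hp : MvPolynomial.eval x p ≠ 0) :
    ∃ y ∈ W, MvPolynomial.eval y p ≠ 0 := by
  have ho : IsOpen {y : RepSpace Q d K | MvPolynomial.eval y p ≠ 0} :=
    TopologicalSpace.isOpen_generateFrom_of_mem ⟨p, rfl⟩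
  obtain ⟨y, hy, hyW⟩ := mem_closure_iff.1 hx _ ho hp
  exact ⟨y, hyW, hy⟩

lemma finite_range_radLayering (L : ℕ) :
    (Set.range (radLayering Q d K L)).Finite := by
  have : Set.range (radLayering Q d K L) ⊆
      Set.Iic (fun (_ : Fin (L+1)) (_ : Fin Q.n) => Module.finrank K (Carrier Q d K)) := by
    rintro _ ⟨x, rfl⟩ l i
    exact (Nat.sub_le _ _).trans (Submodule.finrank_le _)
  exact (Set.finite_Iic _).subset this

lemma eq_bot_of_vdim {N : Submodule K (Carrier Q d K)} (h : ∀ i, vdim Q d K N i = 0) : N = ⊥ := by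
  rw [eq_bot_iff]
  intro m hm
  rw [Submodule.mem_bot, ← sum_proj m]
  refine Finset.sum_eq_zero fun i _ => ?_
  have h1 : N.map (proj Q d K i) = ⊥ := Submodule.finrank_eq_zero.1 (h i)
  have h2 := Submodule.mem_map_of_mem (f := proj Q d K i) hm
  rw [h1] at h2
  simpa using h2

lemma eq_of_vdim_eq {N N' : Submodule K (Carrier Q d K)} (hle : N ≤ N')
    (hgr : ∀ i, N.map (proj Q d K i) ≤ N)
    (h : ∀ i, vdim Q d K N i = vdim Q d K N' i) : N = N' := by
  apply le_antisymm hle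
  intro m hm
  rw [← sum_proj m]
  refine Submodule.sum_mem _ fun i _ => hgr i ?_
  have h1 : N.map (proj Q d K i) = N'.map (proj Q d K i) :=
    Submodule.eq_of_le_of_finrank_eq (Submodule.map_mono hle) (h i)
  rw [h1]
  exact Submodule.mem_map_of_mem hm

lemma radPow_stab (x : RepSpace Q d K) (l : ℕ) (h : radPow Q d K x l = radPow Q d K x (l+1))
    (l' : ℕ) (hl : l ≤ l') : radPow Q d K x l' = radPow Q d K x l := by
  induction l', hl using Nat.le_induction with
  | base => rfl
  | succ n _ ih => rw [radPow_succ, ih, ← radPow_succ, h]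

/-- In a realizable sequence, a zero layer is followed by zero layers only. -/
lemma layer_zero {L : ℕ} (y : RepSpace Q d K)
    (l : Fin (L+1)) (h : ∀ i, radLayering Q d K L y l i = 0) (l' : Fin (L+1)) (hl : l ≤ l') (i) :
    radLayering Q d K L y l' i = 0 := by
  have h1 : radPow Q d K y (l+1) = radPow Q d K y l := by
    refine eq_of_vdim_eq (radPow_succ_le y l) (radPow_graded y _) fun i => ?_
    have := h i
    have := vdim_mono (radPow_succ_le y l) i
    simp only [radLayering] at *
    omega
  have h2 := radPow_stab y l h1.symm l' hl
  have h3 := radPow_stab y l h1.symm (l'+1) (le_trans hl (Nat.le_succ _))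
  simp only [radLayering, h2, h3, Nat.sub_self]

lemma uniserial_between {x : RepSpace Q d K} (hx : UniserialRep Q d K x) (l : ℕ)
    (N : Submodule K (Carrier Q d K)) (h1 : radPow Q d K x (l+1) ≤ N)
    (h2 : N ≤ radPow Q d K x l) (hgr : ∀ i, N.map (proj Q d K i) ≤ N)
    (hne : N ≠ radPow Q d K x (l+1)) : N = radPow Q d K x l := by
  set R := radPow Q d K x (l+1) with hR
  have hu : ∃ u ∈ N, u ∉ R ∧ ∃ i, proj Q d K i u = u := by
    by_contra hcon
    push Not at hcon
    apply hne
    refine le_antisymm (fun m hm => ?_) h1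
    rw [← sum_proj m]
    refine Submodule.sum_mem _ fun i _ => ?_
    by_contra hm'
    exact hcon _ (hgr i (Submodule.mem_map_of_mem hm)) hm' i (proj_proj i m)
  obtain ⟨u, huN, huR, i, hui⟩ := hu
  have hst : ∀ (v : Carrier Q d K) (j : Fin Q.n), v ∈ radPow Q d K x l → proj Q d K j v = v →
      Stable Q d K x (R ⊔ Submodule.span K {v}) := by
    intro v j hv hvj
    constructor
    · intro a
      refine le_trans ?_ le_sup_left
      rw [Submodule.map_le_iff_le_comap]
      have hle : R ⊔ Submodule.span K {v} ≤ radPow Q d K x l :=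
        sup_le (radPow_succ_le x l) (by rwa [Submodule.span_singleton_le_iff_mem])
      refine hle.trans ?_
      rw [← Submodule.map_le_iff_le_comap]
      exact radPow_arrow x l a
    · intro i'
      rw [Submodule.map_sup]
      refine sup_le_sup (radPow_graded x _ i') ?_
      rw [Submodule.map_span_le]
      intro m hm
      rw [Set.mem_singleton_iff] at hm
      subst hm
      by_cases h : i' = j
      · subst h; rw [hvj]; exact Submodule.mem_span_singleton_self _
      · have : proj Q d K i' m = 0 := by
          rw [← hvj]
          funext p
          simp only [proj_apply]
          split_ifs with h3 h4
          · exact absurd (h3.symm.trans h4) h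
          · rfl
          · rfl
        rw [this]; exact Submodule.zero_mem _
  refine le_antisymm h2 fun m hm => ?_
  rw [← sum_proj m]
  refine Submodule.sum_mem _ fun j _ => ?_
  set v := proj Q d K j m with hv
  have hvR : v ∈ radPow Q d K x l := radPow_graded x l j (Submodule.mem_map_of_mem hm)
  rcases hx _ _ (hst u i (h2 huN) hui) (hst v j hvR (proj_proj j m)) with h | h
  · have : u ∈ R ⊔ Submodule.span K {v} :=
      h (Submodule.mem_sup_right (Submodule.mem_span_singleton_self u))
    obtain ⟨f, hf, z, hz, hfz⟩ := Submodule.mem_sup.1 this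
    obtain ⟨c, rfl⟩ := Submodule.mem_span_singleton.1 hz
    have hc : c ≠ 0 := by
      rintro rfl
      apply huR
      rw [← hfz, zero_smul, add_zero]
      exact hf
    have : v = c⁻¹ • (u - f) := by
      rw [← hfz, add_sub_cancel_left, smul_smul, inv_mul_cancel₀ hc, one_smul]
    rw [this]
    exact N.smul_mem _ (N.sub_mem huN (h1 hf))
  · have : v ∈ R ⊔ Submodule.span K {u} :=
      h (Submodule.mem_sup_right (Submodule.mem_span_singleton_self v))
    refine (sup_le h1 ?_ : R ⊔ Submodule.span K {u} ≤ N) this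
    rwa [Submodule.span_singleton_le_iff_mem]

lemma uniserial_unique {L : ℕ} {x : RepSpace Q d K} (hx : UniserialRep Q d K x)
    (y : RepSpace Q d K)
    {F}
    (H : Governed Q d K L x (radLayering Q d K L y) F) :
    radLayering Q d K L y = radLayering Q d K L x := by
  obtain ⟨htop, hbot, hmono, hgr, harr, hdim⟩ := H
  have key : ∀ l, F l = radPow Q d K x l := by
    intro l
    induction l using Fin.induction with
    | zero => rw [htop]; exact (radPow_zero x).symm
    | succ l ih =>
      rw [Fin.val_castSucc] at ih
      rw [Fin.val_succ]
      have h1 : radPow Q d K x (l+1) ≤ F l.succ := by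
        rw [radPow_succ, ← ih]
        exact iSup_le fun a => harr l a
      by_contra hne
      have h2 := uniserial_between hx l (F l.succ) h1 (ih ▸ hmono l) (hgr _) hne
      have h3 : ∀ i, radLayering Q d K L y l i = 0 := by
        intro i
        have := hdim l i
        rw [ih, h2] at this
        omega
      have h4 := layer_zero y l h3
      have h5 : ∀ l' : Fin (L+2), l.castSucc ≤ l' → ∀ i, vdim Q d K (F l') i = 0 := by
        intro l'
        induction l' using Fin.reverseInduction with
        | last => intro _ i; rw [hbot]; simp [vdim]
        | cast l' ih' =>
          intro hl i
          rw [hdim, h4 l' (by simpa using hl), ih' (le_trans hl (Fin.castSucc_lt_succ).le)]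
      have h6 := eq_bot_of_vdim (h5 _ (Fin.castSucc_lt_succ (i := l)).le)
      apply hne
      rw [h6] at h1 ⊢
      exact (eq_bot_iff.2 h1).symm
  funext l i
  have := hdim l i
  rw [key, key] at this
  simp only [Fin.val_castSucc, Fin.val_succ] at this
  conv_rhs => rw [radLayering]
  omega

end QuiverData

open QuiverData in
/-- For an arbitrary basic finite-dimensional algebra `Λ = KQ/I` (with
`J^{L+1} = 0`): if `D` is an irreducible component of the stratum `Rep S` and some point
`x ∈ D` satisfies `Γ(M_x) = 1`, then the closure of `D` is an irreducible component of
`Rep_d(Λ)`. In particular, the closure of `D` is an irreducible component of `Rep_d(Λ)`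
whenever `D` contains a point encoding a uniserial module. -/
theorem statement_19 (K : Type) [Field K] [IsAlgClosed K]
    (Q : QuiverData) (L : ℕ) (d : Fin Q.n → ℕ)
    (Rels : Set (FreeAlgebra K (Fin Q.n ⊕ Fin Q.numArrows)))
    (hLoewy : ∀ x ∈ RepVar Q d K Rels, ∀ w : List (Fin Q.numArrows),
      w.length = L + 1 → wordMap Q d K x w = 0)
    (S : Fin (L+1) → Fin Q.n → ℕ) (hS : hasDimVec S d)
    (D : Set (GenV Q d K Rels))
    (hDsub : D ⊆ {x : GenV Q d K Rels | radLayering Q d K L x.1 = S})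
    (hDirr : IsIrreducible D)
    (hDmax : ∀ E : Set (GenV Q d K Rels),
      E ⊆ {x : GenV Q d K Rels | radLayering Q d K L x.1 = S} →
      IsIrreducible E → D ⊆ E → E = D) :
    ((∃ x ∈ D, gammaCount Q d K L (RepVar Q d K Rels) x.1 = 1) →
        closure D ∈ irreducibleComponents (GenV Q d K Rels)) ∧
    ((∃ x ∈ D, UniserialRep Q d K x.1) →
        closure D ∈ irreducibleComponents (GenV Q d K Rels)) := by
  classical
  have main : (∃ x ∈ D, gammaCount Q d K L (RepVar Q d K Rels) x.1 = 1) →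
      closure D ∈ irreducibleComponents (GenV Q d K Rels) := by
    rintro ⟨x, hxD, hx⟩
    refine ⟨hDirr.closure, fun C hC hDC => ?_⟩
    -- the generic stratum of `C`
    have hfin := finite_range_radLayering (Q := Q) (d := d) (K := K) L
    let str : (Fin (L+1) → Fin Q.n → ℕ) → Set (GenV Q d K Rels) := fun S' =>
      C ∩ {y | radLayering Q d K L y.1 = S'}
    obtain ⟨Z, hZ, hCZ⟩ := isIrreducible_iff_sUnion_isClosed.1 hC
      (hfin.toFinset.image fun S' => closure (str S')) (by
        intro z hz
        obtain ⟨S', -, rfl⟩ := Finset.mem_image.1 hz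
        exact isClosed_closure) (by
        intro y hy
        refine Set.mem_sUnion.2 ⟨closure (str (radLayering Q d K L y.1)), ?_,
          subset_closure ⟨hy, rfl⟩⟩
        rw [Finset.mem_coe]
        exact Finset.mem_image_of_mem _ (hfin.mem_toFinset.2 ⟨_, rfl⟩))
    obtain ⟨S', -, rfl⟩ := Finset.mem_image.1 hZ
    have hxC : x ∈ closure (str S') := hCZ (hDC (subset_closure hxD))
    obtain ⟨y0, hy0⟩ : (str S').Nonempty := closure_nonempty_iff.1 ⟨x, hxC⟩
    have hgov : ∀ y ∈ str S', y.1 ∈ FiltSet Q d K L S' := by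
      rintro y ⟨-, hy⟩
      have := governed_rad y.1 L (hLoewy y.1 y.2)
      rw [show radLayering Q d K L y.1 = S' from hy] at this
      exact ⟨_, this⟩
    have hdim : hasDimVec S' d := by
      obtain ⟨F, hF⟩ := hgov y0 hy0
      exact hasDimVec_of_governed hF
    have hxcl : x.1 ∈ closure (Subtype.val '' str S') :=
      image_closure_subset_closure_image continuous_subtype_val ⟨x, hxC, rfl⟩
    have hxF : x.1 ∈ FiltSet Q d K L S' := by
      refine filtSet_closed S' hdim (Subtype.val '' str S') ?_ x.1 (mem_closure_eval hxcl)
      rintro _ ⟨y, hy, rfl⟩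
      exact hgov y hy
    have hSS : S' = S := by
      obtain ⟨T, hT⟩ := Set.ncard_eq_one.1 hx
      have h1 : S' ∈ ({T} : Set (Fin (L+1) → Fin Q.n → ℕ)) := by
        rw [← hT]
        exact ⟨⟨y0.1, y0.2, hy0.2⟩, hxF⟩
      have h2 : S ∈ ({T} : Set (Fin (L+1) → Fin Q.n → ℕ)) := by
        rw [← hT]
        have hxS : radLayering Q d K L x.1 = S := hDsub hxD
        refine ⟨⟨x.1, x.2, hxS⟩, fun l => radPow Q d K x.1 l, ?_⟩
        rw [← hxS]
        exact governed_rad x.1 L (hLoewy x.1 x.2)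
      rw [Set.mem_singleton_iff] at h1 h2
      rw [h1, h2]
    subst hSS
    have hcl : closure (str S') = closure C :=
      le_antisymm (closure_mono Set.inter_subset_left) (closure_minimal hCZ isClosed_closure)
    have hirr : IsIrreducible (str S') := by
      rw [← isIrreducible_iff_closure, hcl]
      exact hC.closure
    have hEq := hDmax (str S') Set.inter_subset_right hirr
      (fun y hy => ⟨hDC (subset_closure hy), hDsub hy⟩)
    rw [← hEq]
    exact hCZ
  refine ⟨main, ?_⟩
  rintro ⟨x, hxD, hx⟩
  refine main ⟨x, hxD, ?_⟩
  rw [gammaCount, Set.ncard_eq_one]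
  refine ⟨radLayering Q d K L x.1, ?_⟩
  ext T
  rw [Set.mem_singleton_iff]
  constructor
  · rintro ⟨⟨y, hy, rfl⟩, F, hF⟩
    exact uniserial_unique hx y hF
  · rintro rfl
    exact ⟨⟨x.1, x.2, rfl⟩, _, governed_rad x.1 L (hLoewy x.1 x.2)⟩
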